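/- arXiv:1408.6176 — 2 statements merged into one kernel-verified Lean document; each statement's English description precedes it below -/
import Mathlib

section
/- Let n ≥ 2, let P be the tropical polytope generated by v^1,…,v^p ∈ ℝ^n, assume P is pure, and let a be an (I,j)-pseudovertex of P, where I is a nonempty proper subset of {1,…,n} and j ∈ {1,…,n} \ I. Then there exist pairwise distinct indices r_k ∈ {1,…,p}, one for each k ∈ {1,…,n} \ {j}, such that: (i) for every k ∈ {1,…,n} \ (I ∪ {j}), v^{r_k} is an extreme point of P of type k and r_k ∈ S_k(a); (ii) for every i ∈ I, v^{r_i} is an extreme point of P of type j and r_i ∈ (S_i(a) ∩ S_j(a)) \ ⋃_{h∈I∖{i}} S_h(a); moreover, each point v^{r_k} (k ∈ {1,…,n} \ {j}) lies in the boundary of H(a,I), i.e., satisfies max_{i∈I}(v^{r_k}_i − a_i) = max_{l∉I}(v^{r_k}_l − a_l). In particular, the boundary of H(a,I) contains at least n−1 extreme points of P. -/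
section Defs
variable {α : Type*} [LinearOrder α] [AddCommGroup α]

/-- The sector `S(a,i) = {x | x_j - a_j ≤ x_i - a_i for all j}`. -/
def sector {n : ℕ} (a : Fin n → α) (i : Fin n) : Set (Fin n → α) :=
  {x | ∀ j, x j - a j ≤ x i - a i}

/-- The tropical polytope generated by the points `v 0, …, v (p-1)`:
each coordinate of `x` is the maximum over `r` of `l r + v r i`. -/
def tropPoly {n p : ℕ} (v : Fin p → Fin n → α) : Set (Fin n → α) :=
  {x | ∃ l : Fin p → α, ∀ i, IsGreatest (Set.range fun r => l r + v r i) (x i)}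

/-- `v` is an extreme point of `P` of type `i`. -/
def ExtremeOfType {n : ℕ} (P : Set (Fin n → α)) (v : Fin n → α) (i : Fin n) : Prop :=
  v ∈ P ∧ ∀ x ∈ P ∩ sector v i, ∃ c : α, x = fun k => v k + c

/-- `v` is an extreme point of `P`. -/
def IsExtremePt {n : ℕ} (P : Set (Fin n → α)) (v : Fin n → α) : Prop :=
  v ∈ P ∧ ∀ x ∈ P, ∀ y ∈ P, (∀ k, v k = max (x k) (y k)) → v = x ∨ v = y

/-- The tropical half-space `H(a,I)`: `max_{i ∈ I} (x_i - a_i) ≥ max_{j ∉ I} (x_j - a_j)`. -/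
def halfSpace {n : ℕ} (a : Fin n → α) (I : Set (Fin n)) : Set (Fin n → α) :=
  {x | ∃ i ∈ I, ∀ j ∉ I, x j - a j ≤ x i - a i}

/-- `S_i(a)`, the set of indices `r` such that `v r ∈ S(a, i)`. -/
def typeSet {n p : ℕ} (v : Fin p → Fin n → α) (a : Fin n → α) (i : Fin n) : Set (Fin p) :=
  {r | v r ∈ sector a i}

/-- `a` is an `(I,j)`-pseudovertex of the tropical polytope generated by `v`. -/
def IsPseudovertex {n p : ℕ} (v : Fin p → Fin n → α) (a : Fin n → α) (I : Set (Fin n))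
    (j : Fin n) : Prop :=
  (∀ r, ∃ i ∈ I, r ∈ typeSet v a i) ∧
  (∀ k ∉ I, ∃ i ∈ I, (typeSet v a i ∩ typeSet v a k).Nonempty) ∧
  (∀ i ∈ I, ∃ r, r ∈ typeSet v a i ∩ typeSet v a j ∧ ∀ h ∈ I, h ≠ i → r ∉ typeSet v a h)

end Defs

/-- `P` is pure: `P₀ = {x ∈ P | x 0 = 0}` equals the closure of its interior, relative to
the hyperplane `{x | x 0 = 0}` with the subspace topology. -/
def IsPure {n : ℕ} [NeZero n] (P : Set (Fin n → ℝ)) : Prop :=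
  letI P0 : Set {x : Fin n → ℝ // x 0 = 0} := {x | (x : Fin n → ℝ) ∈ P}
  P0 = closure (interior P0)

/-- `x` lies in the boundary of the half-space `H(a,I)`, i.e.
`max_{i ∈ I} (x_i - a_i) = max_{j ∉ I} (x_j - a_j)`. -/
def InBoundary {α : Type*} [LinearOrder α] [AddCommGroup α] {n : ℕ}
    (a : Fin n → α) (I : Set (Fin n)) (x : Fin n → α) : Prop :=
  (∃ i ∈ I, ∀ j ∉ I, x j - a j ≤ x i - a i) ∧ (∃ j ∉ I, ∀ i ∈ I, x i - a i ≤ x j - a j)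

open Filter Topology in
theorem aux_gap {n p : ℕ} (vs : Fin p → Fin n → ℝ) (a : Fin n → ℝ) :
    ∃ ε > 0, ∀ r k l, vs r l - a l < vs r k - a k → vs r l - a l + ε < vs r k - a k := by
  have h : ∀ᶠ ε in 𝓝[>] (0:ℝ), ∀ r k l, vs r l - a l < vs r k - a k →
      vs r l - a l + ε < vs r k - a k := by
    simp only [eventually_all]
    intro r k l h
    have : ∀ᶠ ε in 𝓝 (0:ℝ), ε < (vs r k - a k) - (vs r l - a l) :=
      Iio_mem_nhds (by linarith)
    filter_upwards [nhdsWithin_le_nhds this] with ε hε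
    linarith
  obtain ⟨ε, h1, h2⟩ := (h.and self_mem_nhdsWithin).exists
  exact ⟨ε, h2, h1⟩

theorem aux_B {n p : ℕ} {vs : Fin p → Fin n → ℝ} {x : Fin n → ℝ} (hx : x ∈ tropPoly vs)
    (k : Fin n) : ∃ r, vs r ∈ sector x k := by
  obtain ⟨l, hl⟩ := hx
  obtain ⟨r, hr⟩ := (hl k).1
  refine ⟨r, fun i => ?_⟩
  have := (hl i).2 ⟨r, rfl⟩
  simp only at this hr
  linarith

theorem aux_B' {n p : ℕ} [NeZero n] {vs : Fin p → Fin n → ℝ} {x : Fin n → ℝ}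
    (hx : ∀ k, ∃ r, vs r ∈ sector x k) : x ∈ tropPoly vs := by
  have hmin : ∀ r, ∃ k, ∀ i, x k - vs r k ≤ x i - vs r i := fun r =>
    Finite.exists_min (fun k => x k - vs r k)
  choose m hm using hmin
  refine ⟨fun r => x (m r) - vs r (m r), fun i => ⟨?_, ?_⟩⟩
  · obtain ⟨r, hr⟩ := hx i
    refine ⟨r, ?_⟩
    have h1 := hm r i
    have h2 := hr (m r)
    simp only
    linarith
  · rintro _ ⟨r, rfl⟩
    have h1 := hm r i
    simp only
    linarith

theorem aux_C {n p : ℕ} [NeZero n] (vs : Fin p → Fin n → ℝ) (r : Fin p) (k : Fin n) :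
    ∃ s, ExtremeOfType (tropPoly vs) (vs s) k ∧
      ∀ l, vs s l - vs s k ≤ vs r l - vs r k := by
  classical
  obtain ⟨s, hs, hmin⟩ := Finset.exists_min_image
    (Finset.univ.filter fun s => ∀ l, vs s l - vs s k ≤ vs r l - vs r k)
    (fun s => ∑ l, (vs s l - vs s k)) ⟨r, by simp⟩
  simp only [Finset.mem_filter, Finset.mem_univ, true_and] at hs hmin
  refine ⟨s, ⟨aux_B' fun k => ⟨s, fun i => by simp⟩, ?_⟩, hs⟩
  rintro x ⟨hx, hxs⟩
  obtain ⟨t, ht⟩ := aux_B hx k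
  have h1 : ∀ l, vs t l - vs t k ≤ x l - x k := fun l => by have := ht l; linarith
  have h2 : ∀ l, x l - x k ≤ vs s l - vs s k := fun l => by have := hxs l; linarith
  have h3 := hmin t fun l => ((h1 l).trans (h2 l)).trans (hs l)
  refine ⟨x k - vs s k, funext fun l => ?_⟩
  by_contra hne
  have h4 : x l - x k < vs s l - vs s k := lt_of_le_of_ne (h2 l) fun h => hne (by linarith)
  have : ∑ l, (vs t l - vs t k) < ∑ l, (vs s l - vs s k) :=
    Finset.sum_lt_sum (fun i _ => (h1 i).trans (h2 i)) ⟨l, Finset.mem_univ _, (h1 l).trans_lt h4⟩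
  linarith

open Filter Topology in
theorem aux_A {n p : ℕ} [NeZero n] {vs : Fin p → Fin n → ℝ} (hpure : IsPure (tropPoly vs))
    {x : Fin n → ℝ} (hx : x ∈ tropPoly vs) :
    ∃ y : Fin n → ℝ, (∀ r k, vs r ∈ sector y k → vs r ∈ sector x k) ∧
      ∀ k, ∃ r, ∀ l, l ≠ k → vs r l - y l < vs r k - y k := by
  obtain ⟨ε, hε, hgap⟩ := aux_gap vs x
  let x' : {x : Fin n → ℝ // x 0 = 0} := ⟨fun l => x l - x 0, by simp⟩
  have hx' : (x' : Fin n → ℝ) ∈ tropPoly vs := by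
    apply aux_B'
    intro k
    obtain ⟨r, hr⟩ := aux_B hx k
    exact ⟨r, fun i => by have := hr i; simp only [x']; linarith⟩
  unfold IsPure at hpure
  have hcl : x' ∈ closure (interior {x : {x : Fin n → ℝ // x 0 = 0} |
      (x : Fin n → ℝ) ∈ tropPoly vs}) := by
    rw [← hpure]; exact hx'
  obtain ⟨y, hy, hd⟩ := Metric.mem_closure_iff.1 hcl (ε/2) (by linarith)
  have hd' : ∀ l, |x l - x 0 - y.1 l| < ε / 2 := fun l =>
    lt_of_le_of_lt (dist_le_pi_dist x'.1 y.1 l) hd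
  refine ⟨y.1, ?_, ?_⟩
  · intro r k h l
    by_contra hlt
    have h1 := hgap r l k (not_le.1 hlt)
    have h2 := h l
    have h3 := abs_lt.1 (hd' l)
    have h4 := abs_lt.1 (hd' k)
    linarith [h3.1, h3.2, h4.1, h4.2]
  · intro k
    let f : ℝ → {x : Fin n → ℝ // x 0 = 0} := fun t =>
      ⟨fun l => y.1 l + (Pi.single k t : Fin n → ℝ) l - (Pi.single k t : Fin n → ℝ) 0,
        by simp [y.2]⟩
    have hf : Continuous f := by
      have hc : ∀ l, Continuous fun t : ℝ => (Pi.single k t : Fin n → ℝ) l := by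
        intro l
        by_cases h : l = k
        · subst h; simpa using continuous_id'
        · simpa [h] using continuous_const
      refine Continuous.subtype_mk (continuous_pi fun l => ?_) _
      exact (continuous_const.add (hc l)).sub (hc 0)
    have hf0 : f 0 = y := by
      apply Subtype.ext; funext l; simp [f]
    have h1 : ∀ᶠ t in 𝓝 (0:ℝ), (f t : Fin n → ℝ) ∈ tropPoly vs := by
      have := mem_interior_iff_mem_nhds.1 hy
      rw [← hf0] at this
      exact hf.continuousAt this
    have h1' : ∀ᶠ t in 𝓝[>] (0:ℝ), (f t : Fin n → ℝ) ∈ tropPoly vs := nhdsWithin_le_nhds h1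
    obtain ⟨t, h2, ht⟩ := (h1'.and self_mem_nhdsWithin).exists
    obtain ⟨r, hr⟩ := aux_B h2 k
    refine ⟨r, fun l hl => ?_⟩
    have h3 := hr l
    have ht' : 0 < t := ht
    simp only [f, Pi.single_eq_same, Pi.single_eq_of_ne hl] at h3
    linarith

theorem aux_D {n p : ℕ} [NeZero n] {vs : Fin p → Fin n → ℝ} (hpure : IsPure (tropPoly vs))
    {x : Fin n → ℝ} (hx : x ∈ tropPoly vs) :
    ∃ s : Fin n → Fin p, (∀ k, ExtremeOfType (tropPoly vs) (vs (s k)) k ∧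
      vs (s k) ∈ sector x k) ∧ ∀ k k', vs (s k) = vs (s k') → k = k' := by
  obtain ⟨y, hy, hr⟩ := aux_A hpure hx
  choose r hr using hr
  choose s hs hle using fun k => aux_C vs (r k) k
  have hlt : ∀ k l, l ≠ k → vs (s k) l - y l < vs (s k) k - y k := fun k l hl => by
    have h1 := hr k l hl
    have h2 := hle k l
    linarith
  refine ⟨s, fun k => ⟨hs k, hy _ _ fun l => ?_⟩, fun k k' h => ?_⟩
  · by_cases h : l = k
    · rw [h]
    · exact (hlt k l h).le
  · by_contra hne
    have h1 := hlt k k' (Ne.symm hne)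
    have h2 := hlt k' k hne
    rw [h] at h1
    linarith

theorem aux_ext {n : ℕ} {P : Set (Fin n → ℝ)} {v : Fin n → ℝ} {i : Fin n}
    (h : ExtremeOfType P v i) : IsExtremePt P v := by
  have key : ∀ x ∈ P, (∀ k, x k ≤ v k) → v i = x i → v = x := by
    intro x hx hle he
    obtain ⟨c, hc⟩ := h.2 x ⟨hx, fun k => by have := hle k; linarith⟩
    have : c = 0 := by have := congrFun hc i; linarith
    rw [hc, this]; simp
  refine ⟨h.1, fun x hx y hy hm => ?_⟩
  rcases max_choice (x i) (y i) with h1 | h1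
  · exact Or.inl (key x hx (fun k => by rw [hm k]; exact le_max_left _ _) (by rw [hm i, h1]))
  · exact Or.inr (key y hy (fun k => by rw [hm k]; exact le_max_right _ _) (by rw [hm i, h1]))

theorem aux_local {n p : ℕ} [NeZero n] {vs : Fin p → Fin n → ℝ}
    (hpure : IsPure (tropPoly vs)) {a : Fin n → ℝ} {I : Set (Fin n)} {j : Fin n}
    (hpv : IsPseudovertex vs a I j) (Q : Fin n → Fin n → Prop)
    (hQ : ∀ i k, Q i k ↔ k ∉ I ∧ ∃ r, r ∈ typeSet vs a k ∧ ∀ h ∈ I, r ∈ typeSet vs a h → h = i)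
    (i : Fin n) (hi : i ∈ I) :
    ∃ s : Fin n → Fin p, (∀ k, ExtremeOfType (tropPoly vs) (vs (s k)) k) ∧
      (∀ k, Q i k → s k ∈ typeSet vs a k ∧ ∀ h ∈ I, s k ∈ typeSet vs a h → h = i) ∧
      ∀ k k', vs (s k) = vs (s k') → k = k' := by
  classical
  obtain ⟨ε, hε, hgap⟩ := aux_gap vs a
  let b : Fin n → ℝ := fun l => if l = i ∨ Q i l then a l else a l - ε
  have hb1 : ∀ l, (l = i ∨ Q i l) → b l = a l := fun l h => if_pos h
  have hb2 : ∀ l, ¬ (l = i ∨ Q i l) → b l = a l - ε := fun l h => if_neg h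
  have hb3 : ∀ l, a l - ε ≤ b l ∧ b l ≤ a l := fun l => by
    by_cases h : l = i ∨ Q i l
    · rw [hb1 l h]; constructor <;> linarith
    · rw [hb2 l h]; constructor <;> linarith
  have hne : ∀ r k l, r ∈ typeSet vs a k → r ∉ typeSet vs a l →
      vs r l - a l < vs r k - a k := by
    intro r k l hk hl
    by_contra hc
    exact hl fun m => (hk m).trans (not_lt.1 hc)
  -- sets meeting `I` only in `i` lie in the good region
  have hgood : ∀ r, (∀ h ∈ I, r ∈ typeSet vs a h → h = i) →
      ∀ l, r ∈ typeSet vs a l → (l = i ∨ Q i l) := by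
    intro r hr l hl
    by_cases hlI : l ∈ I
    · exact Or.inl (hr l hlI hl)
    · exact Or.inr ((hQ i l).2 ⟨hlI, r, hl, hr⟩)
  have hsec1 : ∀ r k, (∀ h ∈ I, r ∈ typeSet vs a h → h = i) → r ∈ typeSet vs a k →
      vs r ∈ sector b k := by
    intro r k hr hk l
    rw [hb1 k (hgood r hr k hk)]
    by_cases hl : r ∈ typeSet vs a l
    · rw [hb1 l (hgood r hr l hl)]; exact hk l
    · have h1 := hgap r k l (hne r k l hk hl)
      have := hb3 l
      linarith
  have hsec2 : ∀ r k, ¬ (k = i ∨ Q i k) → r ∈ typeSet vs a k → vs r ∈ sector b k := by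
    intro r k hk hr l
    rw [hb2 k hk]
    have := hb3 l
    have := hr l
    linarith
  have hbP : b ∈ tropPoly vs := by
    apply aux_B'
    intro k
    by_cases hk : k = i ∨ Q i k
    · rcases hk with rfl | hk
      · obtain ⟨r, hr, hr2⟩ := hpv.2.2 k hi
        refine ⟨r, hsec1 r k (fun h hh hm => ?_) hr.1⟩
        by_contra hc
        exact hr2 h hh hc hm
      · obtain ⟨-, r, hr1, hr2⟩ := (hQ i k).1 hk
        exact ⟨r, hsec1 r k hr2 hr1⟩
    · by_cases hkI : k ∈ I
      · obtain ⟨r, hr, -⟩ := hpv.2.2 k hkI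
        exact ⟨r, hsec2 r k hk hr.1⟩
      · obtain ⟨i', -, r, hr⟩ := hpv.2.1 k hkI
        exact ⟨r, hsec2 r k hk hr.2⟩
  obtain ⟨s, hs, hinj⟩ := aux_D hpure hbP
  refine ⟨s, fun k => (hs k).1, fun k hk => ?_, hinj⟩
  have hk' := hb1 k (Or.inr hk)
  have h1 : s k ∈ typeSet vs a k := by
    intro l
    by_contra hc
    have h2 := hgap _ _ _ (not_le.1 hc)
    have h3 := (hs k).2 l
    rw [hk'] at h3
    have := hb3 l
    linarith
  refine ⟨h1, fun h hh hm => ?_⟩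
  by_contra hc
  have hbh := hb2 h (by
    rintro (h' | h')
    · exact hc h'
    · exact ((hQ i h).1 h').1 hh)
  have h3 := (hs k).2 h
  have h4 := hm k
  rw [hk', hbh] at h3
  linarith


/-- if `P` is pure and `a` is an `(I,j)`-pseudovertex of `P`, then there are
pairwise distinct indices `r k` for `k ≠ j` such that: for `k ∉ I ∪ {j}`, `vs (r k)` is an
extreme point of `P` of type `k` with `r k ∈ S_k(a)`; for `i ∈ I`, `vs (r i)` is an extreme
point of `P` of type `j` with `r i ∈ (S_i(a) ∩ S_j(a)) \ ⋃_{h ∈ I, h ≠ i} S_h(a)`; and each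
`vs (r k)` lies in the boundary of `H(a,I)`.  In particular the boundary of `H(a,I)`
contains at least `n - 1` extreme points of `P`. -/
theorem pseudovertex_boundary_extreme_points {n p : ℕ} [NeZero n] (hn : 2 ≤ n)
    (vs : Fin p → Fin n → ℝ) (hpure : IsPure (tropPoly vs))
    (a : Fin n → ℝ) (I : Set (Fin n)) (j : Fin n)
    (hIne : I.Nonempty) (hIpr : I ≠ Set.univ) (hj : j ∉ I)
    (hpv : IsPseudovertex vs a I j) :
    (∃ r : Fin n → Fin p,
      (∀ k k' : Fin n, k ≠ j → k' ≠ j → r k = r k' → k = k') ∧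
      (∀ k : Fin n, k ∉ I → k ≠ j →
        ExtremeOfType (tropPoly vs) (vs (r k)) k ∧ r k ∈ typeSet vs a k) ∧
      (∀ i ∈ I, ExtremeOfType (tropPoly vs) (vs (r i)) j ∧
        r i ∈ typeSet vs a i ∩ typeSet vs a j ∧ (∀ h ∈ I, h ≠ i → r i ∉ typeSet vs a h)) ∧
      (∀ k : Fin n, k ≠ j → InBoundary a I (vs (r k)))) ∧
    (∃ T : Finset (Fin n → ℝ), n - 1 ≤ T.card ∧
      ∀ w ∈ T, IsExtremePt (tropPoly vs) w ∧ InBoundary a I w) := by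
  classical
  have haP : a ∈ tropPoly vs := by
    apply aux_B'
    intro k
    by_cases hk : k ∈ I
    · obtain ⟨r, hr, -⟩ := hpv.2.2 k hk
      exact ⟨r, hr.1⟩
    · obtain ⟨i', -, r, hr⟩ := hpv.2.1 k hk
      exact ⟨r, hr.2⟩
  obtain ⟨s0, hs0, hinj0⟩ := aux_D hpure haP
  obtain ⟨Q, hQ⟩ : ∃ Q : Fin n → Fin n → Prop, ∀ i k, Q i k ↔ k ∉ I ∧
    ∃ r, r ∈ typeSet vs a k ∧ ∀ h ∈ I, r ∈ typeSet vs a h → h = i := ⟨_, fun _ _ => Iff.rfl⟩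
  have hQj : ∀ i ∈ I, Q i j := by
    intro i hi
    obtain ⟨r, hr, hr2⟩ := hpv.2.2 i hi
    refine (hQ i j).2 ⟨hj, r, hr.2, fun h hh hm => ?_⟩
    by_contra hc
    exact hr2 h hh hc hm
  haveI : Nonempty (Fin p) := ⟨s0 j⟩
  choose! s hsE hsQ hsinj using aux_local hpure hpv Q hQ
  have hex : ∀ k, ∃ r, (∃ g ∈ I, ∃ m, Q g m ∧ r = s g m ∧ (k ∈ I → m = j ∧ g = k) ∧
      (k ∉ I → m = k)) ∨ (k ∉ I ∧ (∀ i ∈ I, ¬ Q i k) ∧ r = s0 k) := by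
    intro k
    by_cases hk : k ∈ I
    · exact ⟨_, Or.inl ⟨k, hk, j, hQj k hk, rfl, fun _ => ⟨rfl, rfl⟩, fun h => absurd hk h⟩⟩
    · by_cases hq : ∃ i ∈ I, Q i k
      · obtain ⟨g, hg, hgk⟩ := hq
        exact ⟨_, Or.inl ⟨g, hg, k, hgk, rfl, fun h => absurd h hk, fun _ => rfl⟩⟩
      · push Not at hq
        exact ⟨_, Or.inr ⟨hk, hq, rfl⟩⟩
  choose r hr using hex
  have htr : ∀ r r', vs r = vs r' → ∀ l, r ∈ typeSet vs a l → r' ∈ typeSet vs a l := by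
    intro r r' h l hl
    simp only [typeSet, Set.mem_ofPred_eq] at hl ⊢
    rwa [← h]
  have hmix : ∀ g ∈ I, ∀ m, Q g m → ∀ k, k ∉ I → ¬ Q g k → vs (s g m) ≠ vs (s0 k) := by
    intro g hg m hm k hk hnq he
    exact hnq ((hQ g k).2 ⟨hk, s g m, htr _ _ he.symm k (hs0 k).2, (hsQ g hg m hm).2⟩)
  have hinj : ∀ k k' : Fin n, k ≠ j → k' ≠ j → vs (r k) = vs (r k') → k = k' := by
    intro k k' hkj hkj' he
    rcases hr k with ⟨g, hg, m, hm, h1, h2, h3⟩ | ⟨h1, h2, h3⟩ <;>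
    rcases hr k' with ⟨g', hg', m', hm', h1', h2', h3'⟩ | ⟨h1', h2', h3'⟩
    · rw [h1, h1'] at he
      obtain ⟨i, hi, hmi⟩ := hpv.1 (s g m)
      have e1 : i = g := (hsQ g hg m hm).2 i hi hmi
      have e2 : i = g' := (hsQ g' hg' m' hm').2 i hi (htr _ _ he i hmi)
      have e3 : g = g' := e1.symm.trans e2
      subst e3
      have e4 : m = m' := hsinj g hg _ _ he
      by_cases hk : k ∈ I <;> by_cases hk' : k' ∈ I
      · exact (h2 hk).2.symm.trans (h2' hk').2
      · exact absurd ((h3' hk').symm.trans (e4.symm.trans (h2 hk).1)) hkj'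
      · exact absurd ((h3 hk).symm.trans (e4.trans (h2' hk').1)) hkj
      · exact (h3 hk).symm.trans (e4.trans (h3' hk'))
    · rw [h1, h3'] at he
      exact absurd he (hmix g hg m hm k' h1' (h2' g hg))
    · rw [h1', h3] at he
      exact absurd he.symm (hmix g' hg' m' hm' k h1 (h2 g' hg'))
    · rw [h3, h3'] at he
      exact hinj0 _ _ he
  have hA : ∀ k : Fin n, k ∉ I →
        ExtremeOfType (tropPoly vs) (vs (r k)) k ∧ r k ∈ typeSet vs a k := by
    intro k hk
    rcases hr k with ⟨g, hg, m, hm, h1, h2, h3⟩ | ⟨h1, h2, h3⟩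
    · have := h3 hk
      subst this
      rw [h1]
      exact ⟨hsE g hg m, (hsQ g hg m hm).1⟩
    · rw [h3]
      exact hs0 k
  have hB : ∀ i ∈ I, ExtremeOfType (tropPoly vs) (vs (r i)) j ∧
        r i ∈ typeSet vs a i ∩ typeSet vs a j ∧
        (∀ h ∈ I, h ≠ i → r i ∉ typeSet vs a h) := by
    intro i hi
    rcases hr i with ⟨g, hg, m, hm, h1, h2, h3⟩ | ⟨h1, h2, h3⟩
    · obtain ⟨e1, e2⟩ := h2 hi
      subst e1 e2
      rw [h1]
      obtain ⟨i, hi', hmi⟩ := hpv.1 (s g m)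
      have e1 : i = g := (hsQ g hg m hm).2 i hi' hmi
      subst e1
      exact ⟨hsE i hg m, ⟨hmi, (hsQ i hg m hm).1⟩,
        fun h hh hne hc => hne ((hsQ i hg m hm).2 h hh hc)⟩
    · exact absurd hi h1
  have hC : ∀ k : Fin n, k ≠ j → InBoundary a I (vs (r k)) := by
    intro k _
    by_cases hk : k ∈ I
    · obtain ⟨-, h, -⟩ := hB k hk
      exact ⟨⟨k, hk, fun l _ => h.1 l⟩, ⟨j, hj, fun l _ => h.2 l⟩⟩
    · obtain ⟨i, hi, hmi⟩ := hpv.1 (r k)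
      exact ⟨⟨i, hi, fun l _ => hmi l⟩, ⟨k, hk, fun l _ => (hA k hk).2 l⟩⟩
  refine ⟨⟨r, fun k k' hk hk' h => hinj k k' hk hk' (by rw [h]), fun k hk _ => hA k hk, hB, hC⟩,
    (Finset.univ.erase j).image (fun k => vs (r k)), ?_, ?_⟩
  · rw [Finset.card_image_of_injOn]
    · simp
    · intro k hk k' hk' he
      simp only [Finset.coe_erase, Finset.coe_univ, Set.mem_sdiff, Set.mem_univ,
        Set.mem_singleton_iff, true_and] at hk hk'
      exact hinj k k' hk hk' he
  · intro w hw
    simp only [Finset.mem_image, Finset.mem_erase, Finset.mem_univ, and_true] at hw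
    obtain ⟨k, hk, rfl⟩ := hw
    refine ⟨?_, hC k hk⟩
    by_cases hkI : k ∈ I
    · exact aux_ext (hB k hkI).1
    · exact aux_ext (hA k hkI).1
end

section
/- Let n ≥ 2 and let P be the tropical polytope generated by v^1,…,v^p ∈ ℝ^n. Assume P is pure (so every extreme point of P has exactly one extremality type), fix γ^1,…,γ^p ∈ ℝ^n, and define the perturbed points ṽ^1,…,ṽ^p ∈ G^n and the tropical polytope P̃ ⊆ G^n as in the context. Let ã ∈ G^n be an (I,j)-pseudovertex of P̃, where I is a nonempty proper subset of {1,…,n} and j ∈ {1,…,n} \ I. Then there exists c ∈ ℝ such that π_2(ã_i) = c for every i ∈ I and π_2(ã_k) = c + 1 for every k ∈ {1,…,n} \ I. -/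
/-- The group `G = ℝ³` with componentwise addition and the lexicographic order. -/
abbrev G : Type := ℝ ×ₗ ℝ ×ₗ ℝ

/-- First coordinate projection `π₁ : G → ℝ`. -/
def pi1 (g : G) : ℝ := (ofLex g).1
/-- Second coordinate projection `π₂ : G → ℝ`. -/
def pi2 (g : G) : ℝ := (ofLex (ofLex g).2).1
/-- Third coordinate projection `π₃ : G → ℝ`. -/
def pi3 (g : G) : ℝ := (ofLex (ofLex g).2).2

/-- Build an element of `G` from its three real coordinates. -/
def mkG (a b c : ℝ) : G := toLex (a, toLex (b, c))

lemma aux_gen_mem {n p : ℕ} (v : Fin p → Fin n → ℝ) (s : Fin p) : v s ∈ tropPoly v := by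
  refine ⟨fun r => -∑ h, |v s h - v r h|, fun i => ⟨⟨s, by simp⟩, ?_⟩⟩
  rintro _ ⟨r, rfl⟩
  have h1 : |v s i - v r i| ≤ ∑ h, |v s h - v r h| :=
    Finset.single_le_sum (f := fun h => |v s h - v r h|) (fun _ _ => abs_nonneg _)
      (Finset.mem_univ i)
  have h2 := neg_abs_le (v s i - v r i)
  simp only
  linarith

lemma aux_exists_ext {n p : ℕ} (v : Fin p → Fin n → ℝ) (r : Fin p) (k : Fin n) :
    ∃ s, v s ∈ sector (v r) k ∧ ExtremeOfType (tropPoly v) (v s) k := by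
  classical
  obtain ⟨s, hs, hmin⟩ := Set.exists_min_image {s | v s ∈ sector (v r) k}
    (fun s => ∑ h, (v s h - v s k)) (Set.toFinite _) ⟨r, by intro h; simp⟩
  refine ⟨s, hs, aux_gen_mem v s, ?_⟩
  rintro x ⟨⟨l, hl⟩, hx⟩
  obtain ⟨q, hq⟩ := (hl k).1
  simp only at hq
  have hxq : ∀ h, v q h - v q k ≤ x h - x k := fun h => by
    have := (hl h).2 ⟨q, rfl⟩
    simp only at this
    linarith
  have hxs : ∀ h, x h - x k ≤ v s h - v s k := fun h => by
    have := hx h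
    linarith
  have hqr : v q ∈ sector (v r) k := fun h => by
    have := hs h
    have := hxq h
    have := hxs h
    linarith
  have h1 := hmin q hqr
  have h2 : ∀ h ∈ Finset.univ, v q h - v q k ≤ v s h - v s k :=
    fun h _ => (hxq h).trans (hxs h)
  have h3 := (Finset.sum_eq_sum_iff_of_le h2).1 (le_antisymm (Finset.sum_le_sum h2) h1)
  refine ⟨x k - v s k, funext fun h => ?_⟩
  have := h3 h (Finset.mem_univ h)
  have := hxq h
  have := hxs h
  linarith

lemma aux_local_s15 {n p : ℕ} (v : Fin p → Fin n → ℝ) (w : Fin n → ℝ) (k l : Fin n)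
    (hk : ExtremeOfType (tropPoly v) w k) (x : Fin n → ℝ) (hx : x ∈ tropPoly v)
    (hU : ∀ s h m, w h - w m < v s h - v s m → x h - x m < v s h - v s m) :
    x k - w k ≤ x l - w l := by
  obtain ⟨t, ht⟩ := hx
  obtain ⟨s, hs⟩ := (ht k).1
  simp only at hs
  have hsec : v s ∈ sector w k := by
    intro h
    by_contra hc
    have h1 := hU s h k (by linarith)
    have h2 := (ht h).2 ⟨s, rfl⟩
    simp only at h2
    linarith
  obtain ⟨c, hc⟩ := hk.2 (v s) ⟨aux_gen_mem v s, hsec⟩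
  have h2 := (ht l).2 ⟨s, rfl⟩
  have h3 := congrFun hc k
  have h4 := congrFun hc l
  simp only at h2 h3 h4
  linarith

lemma aux_unique' {n p : ℕ} [NeZero n] (v : Fin p → Fin n → ℝ) (hpure : IsPure (tropPoly v))
    (w : Fin n → ℝ) (k l : Fin n) (hkl : k ≠ l) (hk0 : k ≠ 0)
    (hk : ExtremeOfType (tropPoly v) w k) (hl : ExtremeOfType (tropPoly v) w l) : False := by
  unfold IsPure at hpure
  set P0 : Set {x : Fin n → ℝ // x 0 = 0} := {x | (x : Fin n → ℝ) ∈ tropPoly v} with hP0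
  let U : Set {x : Fin n → ℝ // x 0 = 0} :=
    {x | ∀ s h m, w h - w m < v s h - v s m → x.1 h - x.1 m < v s h - v s m}
  have hUo : IsOpen U := by
    simp only [U, Set.ofPred_forall]
    refine isOpen_iInter_of_finite fun s => isOpen_iInter_of_finite fun h =>
      isOpen_iInter_of_finite fun m => isOpen_iInter_of_finite fun _ => ?_
    exact isOpen_lt (((continuous_apply h).comp continuous_subtype_val).sub
      ((continuous_apply m).comp continuous_subtype_val)) continuous_const
  let w0 : {x : Fin n → ℝ // x 0 = 0} := ⟨fun h => w h - w 0, by simp⟩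
  have hw0U : w0 ∈ U := by
    intro s h m hh
    simp only [w0]
    linarith
  have hw0 : w0 ∈ P0 := by
    obtain ⟨t, ht⟩ := hk.1
    refine ⟨fun r => t r - w 0, fun i => ⟨?_, ?_⟩⟩
    · obtain ⟨r, hr⟩ := (ht i).1
      refine ⟨r, ?_⟩
      simp only [w0] at hr ⊢
      linarith
    · rintro _ ⟨r, rfl⟩
      have := (ht i).2 ⟨r, rfl⟩
      simp only [w0] at this ⊢
      linarith
  rw [hpure] at hw0
  obtain ⟨y, hyU, hyI⟩ := mem_closure_iff.1 hw0 U hUo hw0U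
  let f : ℝ → {x : Fin n → ℝ // x 0 = 0} := fun t =>
    ⟨fun h => y.1 h + if h = k then t else 0, by simp [y.2, hk0.symm]⟩
  have hf : Continuous f := by
    refine Continuous.subtype_mk (continuous_pi fun h => ?_) _
    split_ifs <;> fun_prop
  have hf0 : f 0 = y := by
    apply Subtype.ext
    funext h
    simp [f]
  have hO : IsOpen (f ⁻¹' (U ∩ interior P0)) := (hUo.inter isOpen_interior).preimage hf
  have h0 : (0:ℝ) ∈ f ⁻¹' (U ∩ interior P0) := by
    rw [Set.mem_preimage, hf0]
    exact ⟨hyU, hyI⟩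
  obtain ⟨ε, hε, hball⟩ := Metric.isOpen_iff.1 hO 0 h0
  have key : ∀ z ∈ U ∩ interior P0, z.1 k - w k = z.1 l - w l := fun z hz =>
    le_antisymm (aux_local_s15 v w k l hk z.1 (interior_subset (s := P0) hz.2) hz.1)
      (aux_local_s15 v w l k hl z.1 (interior_subset (s := P0) hz.2) hz.1)
  have e0 := key y ⟨hyU, hyI⟩
  have e1 := key (f (ε/2)) (hball (by simp [abs_of_pos hε]; linarith))
  simp [f, hkl.symm] at e1
  linarith

lemma aux_unique {n p : ℕ} [NeZero n] (v : Fin p → Fin n → ℝ) (hpure : IsPure (tropPoly v))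
    (w : Fin n → ℝ) (k l : Fin n) (hkl : k ≠ l)
    (hk : ExtremeOfType (tropPoly v) w k) : ¬ ExtremeOfType (tropPoly v) w l := by
  intro hl
  by_cases h : k = 0
  · exact aux_unique' v hpure w l k hkl.symm (fun h' => hkl (h.trans h'.symm)) hl hk
  · exact aux_unique' v hpure w k l hkl h hk hl

lemma aux_le (x y : G) (h : x ≤ y) : pi1 x ≤ pi1 y ∧ (pi1 x = pi1 y → pi2 x ≤ pi2 y) := by
  rw [Prod.Lex.le_iff] at h
  rcases h with h | ⟨h, h'⟩
  · exact ⟨h.le, fun e => absurd e h.ne⟩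
  · refine ⟨h.le, fun _ => ?_⟩
    rw [Prod.Lex.le_iff] at h'
    rcases h' with h' | h'
    · exact h'.le
    · exact h'.1.le

lemma aux_sec {n : ℕ} (x a : Fin n → G) (i : Fin n) (h : x ∈ sector a i) (m : Fin n) :
    pi1 (x m) - pi1 (a m) ≤ pi1 (x i) - pi1 (a i) ∧
    (pi1 (x m) - pi1 (a m) = pi1 (x i) - pi1 (a i) →
      pi2 (x m) - pi2 (a m) ≤ pi2 (x i) - pi2 (a i)) :=
  aux_le _ _ (h m)

/-- if `ã` is an `(I,j)`-pseudovertex of the symbolically perturbed polytope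
`P̃`, then, for some `c ∈ ℝ`, the first-order perturbation `π₂(ã)` equals `c` on `I` and
`c + 1` outside `I`. -/
theorem pseudovertex_fst_order_perturbation {n p : ℕ} [NeZero n] (hn : 2 ≤ n)
    (v : Fin p → Fin n → ℝ) (hpure : IsPure (tropPoly v))
    (γ : Fin p → Fin n → ℝ) (vt : Fin p → Fin n → G)
    (hvt1 : ∀ (r : Fin p) (k : Fin n), ExtremeOfType (tropPoly v) (v r) k →
      vt r k = mkG (v r k) 1 (γ r k))
    (hvt2 : ∀ (r : Fin p) (k : Fin n), ¬ ExtremeOfType (tropPoly v) (v r) k →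
      vt r k = mkG (v r k) 0 (γ r k))
    (at_ : Fin n → G) (I : Set (Fin n)) (j : Fin n)
    (hIne : I.Nonempty) (hIpr : I ≠ Set.univ) (hj : j ∉ I)
    (hpv : IsPseudovertex vt at_ I j) :
    ∃ c : ℝ, (∀ i ∈ I, pi2 (at_ i) = c) ∧ (∀ k ∉ I, pi2 (at_ k) = c + 1) := by
  classical
  have hp1 : ∀ r k, pi1 (vt r k) = v r k := fun r k => by
    by_cases h : ExtremeOfType (tropPoly v) (v r) k
    · rw [hvt1 r k h]; rfl
    · rw [hvt2 r k h]; rfl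
  have hd1 : ∀ r k, ExtremeOfType (tropPoly v) (v r) k → pi2 (vt r k) = 1 := fun r k h => by
    rw [hvt1 r k h]; rfl
  have hd0 : ∀ r k, ¬ ExtremeOfType (tropPoly v) (v r) k → pi2 (vt r k) = 0 := fun r k h => by
    rw [hvt2 r k h]; rfl
  have hdn : ∀ r k, 0 ≤ pi2 (vt r k) := fun r k => by
    by_cases h : ExtremeOfType (tropPoly v) (v r) k
    · rw [hd1 r k h]; norm_num
    · rw [hd0 r k h]
  obtain ⟨c1, c2, c3⟩ := hpv
  have ext : ∀ k ∉ I, ∀ r ∈ typeSet vt at_ k, ExtremeOfType (tropPoly v) (v r) k := by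
    intro k hk r hr
    by_contra hne
    obtain ⟨s, hsec, hs⟩ := aux_exists_ext v r k
    obtain ⟨i, hi, hsi⟩ := c1 s
    have hki : k ≠ i := fun e => hk (e ▸ hi)
    have hs0 := hd0 s i (aux_unique v hpure (v s) k i hki hs)
    have hs1 := hd1 s k hs
    have hr0 := hd0 r k hne
    have hri := hdn r i
    obtain ⟨A1, A2⟩ := aux_sec _ _ _ hr i
    obtain ⟨B1, B2⟩ := aux_sec _ _ _ hsi k
    simp only [hp1] at A1 A2 B1 B2
    have C := hsec i
    have A3 := A2 (by linarith)
    have B3 := B2 (by linarith)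
    linarith
  have diff : ∀ i ∈ I, ∀ k ∉ I, ∀ r ∈ typeSet vt at_ i ∩ typeSet vt at_ k,
      pi2 (at_ k) = pi2 (at_ i) + 1 := by
    rintro i hi k hk r ⟨hri, hrk⟩
    have he := ext k hk r hrk
    have hki : k ≠ i := fun e => hk (e ▸ hi)
    have h0 := hd0 r i (aux_unique v hpure (v r) k i hki he)
    have h1 := hd1 r k he
    obtain ⟨A1, A2⟩ := aux_sec _ _ _ hrk i
    obtain ⟨B1, B2⟩ := aux_sec _ _ _ hri k
    have A3 := A2 (le_antisymm A1 B1)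
    have B3 := B2 (le_antisymm B1 A1)
    linarith
  have hI : ∀ i ∈ I, pi2 (at_ i) = pi2 (at_ j) - 1 := fun i hi => by
    obtain ⟨r, hr, -⟩ := c3 i hi
    have := diff i hi j hj r hr
    linarith
  refine ⟨pi2 (at_ j) - 1, hI, fun k hk => ?_⟩
  obtain ⟨i, hi, r, hr⟩ := c2 k hk
  have := diff i hi k hk r hr
  have := hI i hi
  linarith
end
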